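/- Let V be a nonzero complex vector space and let σ, σ' : V → V be two quaternionic structures (conjugate-linear maps with σ ∘ σ = −id_V and σ' ∘ σ' = −id_V) such that σ ∘ σ' = λ·id_V for some λ ∈ ℂ. Then σ(v) = −λ·σ'(v) for all v ∈ V, |λ| = 1, and there exists μ ∈ ℂ with |μ| = 1 and μ² = −λ such that σ = (μ·id_V) ∘ σ' ∘ (μ·id_V)⁻¹. In particular σ and σ' are conjugate by a ℂ-linear automorphism of V given by a unit scalar. -/

import Mathlib

/-- Two quaternionic structures on a nonzero complex vector space whose
composite is a scalar `λ` satisfy `σ = (-λ) • σ'`, `|λ| = 1`, and are conjugate by a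
unit scalar `μ` with `μ² = -λ`. -/
theorem two_quaternionic_structures_conjugate
    (V : Type*) [AddCommGroup V] [Module ℂ V] [Nontrivial V]
    (σ σ' : V → V)
    (hadd : ∀ v w : V, σ (v + w) = σ v + σ w)
    (hconj : ∀ (l : ℂ) (v : V), σ (l • v) = (starRingEnd ℂ l) • σ v)
    (hadd' : ∀ v w : V, σ' (v + w) = σ' v + σ' w)
    (hconj' : ∀ (l : ℂ) (v : V), σ' (l • v) = (starRingEnd ℂ l) • σ' v)
    (hσ : ∀ v : V, σ (σ v) = -v)
    (hσ' : ∀ v : V, σ' (σ' v) = -v)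
    (l : ℂ) (hl : ∀ v : V, σ (σ' v) = l • v) :
    (∀ v : V, σ v = (-l) • σ' v) ∧
    ‖l‖ = 1 ∧
    ∃ μ : ℂ, ‖μ‖ = 1 ∧ μ ^ 2 = -l ∧ ∀ v : V, σ v = μ • σ' (μ⁻¹ • v) := by
  have hneg : ∀ v : V, σ (-v) = -σ v := by
    intro v
    have := hconj (-1) v
    simpa using this
  have h1 : ∀ v : V, σ v = (-l) • σ' v := by
    intro v
    have h := hl (σ' v)
    rw [hσ', hneg] at h
    rw [neg_smul, ← h, neg_neg]
  have h2 : ‖l‖ = 1 := by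
    obtain ⟨v, hv⟩ := exists_ne (0 : V)
    have h := hσ v
    rw [h1 v, hconj, hl, smul_smul, map_neg, neg_mul, neg_smul, neg_inj] at h
    have h3 : (starRingEnd ℂ l * l - 1) • v = 0 := by
      rw [sub_smul, h, one_smul, sub_self]
    have h4 : starRingEnd ℂ l * l = 1 :=
      sub_eq_zero.mp ((smul_eq_zero.mp h3).resolve_right hv)
    have h5 := congrArg norm h4
    rw [norm_mul, RCLike.norm_conj, norm_one] at h5
    nlinarith [norm_nonneg l]
  refine ⟨h1, h2, ?_⟩
  obtain ⟨μ, hμ⟩ := IsAlgClosed.exists_pow_nat_eq (-l) (n := 2) (by norm_num)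
  have hn : ‖μ‖ = 1 := by
    have h5 := congrArg norm hμ
    rw [norm_pow, norm_neg, h2] at h5
    nlinarith [norm_nonneg μ]
  refine ⟨μ, hn, hμ, fun v => ?_⟩
  have hc : starRingEnd ℂ μ⁻¹ = μ := by
    rw [Complex.inv_eq_conj hn, Complex.conj_conj]
  rw [hconj', hc, smul_smul, ← sq, hμ, h1]
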